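/- Let Q be a Dynkin or Euclidean quiver, α a real Schur root, and d ∈ ℤ^n. Then d lies in the cone H_α^{ss} if and only if the unique indecomposable representation M(α) of dimension vector α is ⟨d,−⟩-semi-stable. -/

import Mathlib

open Matrix BigOperators

/-- A finite quiver: `n` vertices, `a` arrows with source and target maps. -/
structure FinQuiver where
  n : ℕ
  a : ℕ
  src : Fin a → Fin n
  tgt : Fin a → Fin n

namespace FinQuiver

/-- A finite quiver is acyclic iff it admits a topological ordering of vertices. -/
def Acyclic (Q : FinQuiver) : Prop :=
  ∃ h : Fin Q.n → ℕ, ∀ x, h (Q.src x) < h (Q.tgt x)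

/-- Connectivity of the underlying graph. -/
def Connected (Q : FinQuiver) : Prop :=
  ∀ S : Finset (Fin Q.n), S.Nonempty → S ≠ Finset.univ →
    ∃ x, (Q.src x ∈ S ∧ Q.tgt x ∉ S) ∨ (Q.tgt x ∈ S ∧ Q.src x ∉ S)

/-- The Euler form ⟨d,e⟩ = Σ_i d_i e_i − Σ_{α : i → j} d_i e_j. -/
def euler (Q : FinQuiver) (d e : Fin Q.n → ℤ) : ℤ :=
  (∑ i, d i * e i) - ∑ x, d (Q.src x) * e (Q.tgt x)

/-- A (possibly disconnected) Dynkin quiver: acyclic with positive definite Tits form. -/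
def IsDynkin (Q : FinQuiver) : Prop :=
  Q.Acyclic ∧ ∀ d : Fin Q.n → ℤ, d ≠ 0 → 0 < Q.euler d d

/-- `δ` is the null root: positive, isotropic, and every isotropic vector is an
integer multiple of `δ`. -/
def IsNullRoot (Q : FinQuiver) (δ : Fin Q.n → ℤ) : Prop :=
  (∀ i, 0 < δ i) ∧ Q.euler δ δ = 0 ∧
    ∀ d : Fin Q.n → ℤ, Q.euler d d = 0 → ∃ m : ℤ, d = m • δ

/-- A Euclidean (affine) quiver: connected, acyclic, positive semidefinite Tits form
with a null root. -/
def IsEuclidean (Q : FinQuiver) : Prop :=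
  Q.Acyclic ∧ Q.Connected ∧ (∀ d, 0 ≤ Q.euler d d) ∧ ∃ δ, Q.IsNullRoot δ

end FinQuiver

/-- A finite-dimensional representation of `Q` over `k`: dimensions at each vertex,
and a matrix for each arrow. -/
structure QRep (k : Type) [Field k] (Q : FinQuiver) where
  d : Fin Q.n → ℕ
  mat : ∀ x : Fin Q.a, Matrix (Fin (d (Q.tgt x))) (Fin (d (Q.src x))) k

namespace QRep

variable {k : Type} [Field k] {Q : FinQuiver}

/-- The dimension vector of a representation, as an integer vector. -/
def dimVec (M : QRep k Q) : Fin Q.n → ℤ := fun i => (M.d i : ℤ)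

/-- The space of morphisms of representations `M → N`. -/
def homSpace (M N : QRep k Q) :
    Submodule k (∀ i, Matrix (Fin (N.d i)) (Fin (M.d i)) k) where
  carrier := {f | ∀ x, f (Q.tgt x) * M.mat x = N.mat x * f (Q.src x)}
  add_mem' := by
    intro f g hf hg x
    simp only [Pi.add_apply, Matrix.add_mul, Matrix.mul_add, hf x, hg x]
  zero_mem' := by intro x; simp
  smul_mem' := by
    intro c f hf x
    simp only [Pi.smul_apply, Matrix.smul_mul, Matrix.mul_smul, hf x]

/-- The standard map whose kernel is `Hom(M,N)` and cokernel is `Ext¹(M,N)`. -/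
def extMap (M N : QRep k Q) :
    (∀ i, Matrix (Fin (N.d i)) (Fin (M.d i)) k) →ₗ[k]
    (∀ x : Fin Q.a, Matrix (Fin (N.d (Q.tgt x))) (Fin (M.d (Q.src x))) k) where
  toFun f := fun x => f (Q.tgt x) * M.mat x - N.mat x * f (Q.src x)
  map_add' := by
    intro f g; funext x
    simp only [Pi.add_apply, Matrix.add_mul, Matrix.mul_add]
    abel
  map_smul' := by
    intro c f; funext x
    simp only [Pi.smul_apply, Matrix.smul_mul, Matrix.mul_smul, RingHom.id_apply,
      smul_sub]

/-- dim_k Hom(M,N). -/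
noncomputable def homDim (M N : QRep k Q) : ℕ :=
  Module.finrank k (homSpace M N)

/-- dim_k Ext¹(M,N), defined as the dimension of the cokernel of `extMap`. -/
noncomputable def extDim (M N : QRep k Q) : ℕ :=
  Module.finrank k
    ((∀ x : Fin Q.a, Matrix (Fin (N.d (Q.tgt x))) (Fin (M.d (Q.src x))) k) ⧸
      LinearMap.range (extMap M N))

/-- Isomorphism of representations. -/
def IsoRep (M N : QRep k Q) : Prop :=
  ∃ f ∈ homSpace M N, ∀ i, Function.Bijective (Matrix.mulVecLin (f i))

/-- `L` is (the source of a monomorphism into) a subrepresentation of `M`. -/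
def IsSubrep (L M : QRep k Q) : Prop :=
  ∃ f ∈ homSpace L M, ∀ i, Function.Injective (Matrix.mulVecLin (f i))

/-- `L` is a direct summand of `M` (split monomorphism with retraction). -/
def IsSummand (L M : QRep k Q) : Prop :=
  ∃ f ∈ homSpace L M, ∃ g ∈ homSpace M L, ∀ i, g i * f i = 1

/-- `M` is indecomposable: nonzero, and its endomorphism ring has no nontrivial
idempotents. -/
def Indec (M : QRep k Q) : Prop :=
  (∃ i, M.d i ≠ 0) ∧
    ∀ f ∈ homSpace M M, (∀ i, f i * f i = f i) → f = 0 ∨ f = 1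

/-- An exceptional representation: indecomposable and rigid. -/
def Exceptional (M : QRep k Q) : Prop :=
  Indec M ∧ extDim M M = 0

/-- `(f, g)` form a short exact sequence `0 → A → B → C → 0` of representations. -/
def IsSES (A B C : QRep k Q)
    (f : ∀ i, Matrix (Fin (B.d i)) (Fin (A.d i)) k)
    (g : ∀ i, Matrix (Fin (C.d i)) (Fin (B.d i)) k) : Prop :=
  f ∈ homSpace A B ∧ g ∈ homSpace B C ∧
    ∀ i, Function.Injective (Matrix.mulVecLin (f i)) ∧
      Function.Surjective (Matrix.mulVecLin (g i)) ∧
      LinearMap.range (Matrix.mulVecLin (f i)) = LinearMap.ker (Matrix.mulVecLin (g i))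

/-- A thick (= abelian and extension-closed, since rep(Q) is hereditary) full
subcategory: closed under isomorphism, direct summands and two-out-of-three for
short exact sequences. -/
def Thick (P : QRep k Q → Prop) : Prop :=
  (∀ M N, IsoRep M N → P M → P N) ∧
  (∀ L M, IsSummand L M → P M → P L) ∧
  (∀ A B C f g, IsSES A B C f g →
    ((P A → P B → P C) ∧ (P A → P C → P B) ∧ (P B → P C → P A)))

/-- `P` is the smallest thick subcategory containing `S`. -/
def GeneratedBy (P : QRep k Q → Prop) (S : Set (QRep k Q)) : Prop :=
  Thick P ∧ (∀ X ∈ S, P X) ∧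
    ∀ P' : QRep k Q → Prop, Thick P' → (∀ X ∈ S, P' X) → ∀ M, P M → P' M

/-- An exceptional sequence. -/
def ExcSeq {r : ℕ} (E : Fin r → QRep k Q) : Prop :=
  (∀ i, Exceptional (E i) ∧ homDim (E i) (E i) = 1) ∧
    ∀ i j : Fin r, i < j → homDim (E i) (E j) = 0 ∧ extDim (E i) (E j) = 0

/-- King's criterion for `⟨d,−⟩`-semi-stability. -/
def SemiStable (d : Fin Q.n → ℤ) (M : QRep k Q) : Prop :=
  Q.euler d M.dimVec = 0 ∧ ∀ L : QRep k Q, IsSubrep L M → Q.euler d L.dimVec ≤ 0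

/-- `M` is regular: every indecomposable summand pairs to zero with the null root. -/
def RegularRep (δ : Fin Q.n → ℤ) (M : QRep k Q) : Prop :=
  ∀ L, IsSummand L M → Indec L → Q.euler δ L.dimVec = 0

/-- `M` is in the right perpendicular category of `V`. -/
def RPerp (V M : QRep k Q) : Prop := homDim V M = 0 ∧ extDim V M = 0

/-- `M` is in the left perpendicular category of `V`. -/
def LPerp (V M : QRep k Q) : Prop := homDim M V = 0 ∧ extDim M V = 0

/-- `P` is a projective representation (Ext¹(P,−) = 0). -/
def IsProjRep (P : QRep k Q) : Prop := ∀ M : QRep k Q, extDim P M = 0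

end QRep

/-- `α` is a Schur root: the dimension vector of an indecomposable representation
with trivial endomorphism ring. -/
def IsSchurRoot (k : Type) [Field k] (Q : FinQuiver) (α : Fin Q.n → ℤ) : Prop :=
  ∃ M : QRep k Q, M.dimVec = α ∧ QRep.Indec M ∧ QRep.homDim M M = 1

/-- `ext(α,β) = 0`: some representations of these dimension vectors have no
extensions. -/
def ExtZero (k : Type) [Field k] (Q : FinQuiver) (α β : Fin Q.n → ℤ) : Prop :=
  ∃ M N : QRep k Q, M.dimVec = α ∧ N.dimVec = β ∧ QRep.extDim M N = 0

/-- Kac's characterization of the canonical decomposition: `c` is the canonical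
decomposition of `d` iff the entries sum to `d`, are Schur roots, and are pairwise
ext-orthogonal. -/
def IsCanonDecomp (k : Type) [Field k] (Q : FinQuiver) (d : Fin Q.n → ℤ)
    (c : List (Fin Q.n → ℤ)) : Prop :=
  c.sum = d ∧ (∀ α ∈ c, IsSchurRoot k Q α) ∧
    ∀ i j : Fin c.length, i ≠ j → ExtZero k Q (c.get i) (c.get j)

open QRep

variable {k : Type} [Field k] {Q : FinQuiver}

/-- `e` is supported on the support of `M`. -/
def SupportedOn (M : QRep k Q) (e : Fin Q.n → ℤ) : Prop :=
  ∀ i, e i ≠ 0 → M.d i ≠ 0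

/-- `M` is `⟨d,−⟩`-semi-stable: some semi-invariant `C^V` with `V` supported on
the support of `M` and weight agreeing with a positive multiple of `⟨d,−⟩` there
does not vanish on `M`. -/
def SemiStableAt (d : Fin Q.n → ℤ) (M : QRep k Q) : Prop :=
  ∃ m : ℤ, 0 < m ∧ ∃ V : QRep k Q, SupportedOn M V.dimVec ∧
    (∀ e : Fin Q.n → ℤ, SupportedOn M e →
      Q.euler V.dimVec e = m * Q.euler d e) ∧
    RPerp V M

/-- Membership in the convex cone generated by a set of rational vectors. -/
def InCone {n : ℕ} (S : Set (Fin n → ℚ)) (v : Fin n → ℚ) : Prop :=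
  ∃ l : List (ℚ × (Fin n → ℚ)), (∀ p ∈ l, 0 ≤ p.1 ∧ p.2 ∈ S) ∧
    v = (l.map fun p => p.1 • p.2).sum

/-- `M` is a relative simple object of the left perpendicular category `^⊥V`. -/
def RelSimple (V M : QRep k Q) : Prop :=
  LPerp V M ∧ (∃ i, M.d i ≠ 0) ∧
    ∀ L, IsSubrep L M → LPerp V L → (∀ i, L.d i = 0) ∨ L.dimVec = M.dimVec

/-- Generators of the cone `H_α^{ss}`: dimension vectors of the relative simples
of `^⊥M(α)` and negatives of the dimension vectors of the indecomposable
projectives lying in `^⊥M(α)`. -/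
def HssGens (Mα : QRep k Q) : Set (Fin Q.n → ℚ) :=
  {v | ∃ S : QRep k Q, RelSimple Mα S ∧ v = fun i => ((S.d i : ℚ))} ∪
  {v | ∃ P : QRep k Q, Indec P ∧ IsProjRep P ∧ LPerp Mα P ∧
    v = fun i => -((P.d i : ℚ))}

/-!
Let `Λ` be the monoid of dimension vectors of objects of `^⊥M`, and let `T` be the group of vectors
`u` whose weight `⟨u,−⟩` vanishes on the support of `M`. Both conditions on `d` say that a positive
multiple of `d` lies in `Λ + T`.

For the cone: an object of `^⊥M` is filtered by relative simples, so these generate `Λ`. The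
projectives at the vertices, being dual to the simples under the Euler form, give the expansion
`u = ∑ i, ⟨u, e_i⟩ • dim P_i`; hence the projectives outside the support of `M`, which are those in
`^⊥M`, generate the group `T`.

For semi-stability: a decomposition `m • d = dim W + u` yields a witness `V` once `W` is replaced
by an object supported on `M`. Dividing `W` by its subrepresentation `U` generated at the vertices
off the support does this: `Hom(U, M) = 0`, and `⟨U,−⟩` is nonpositive on the support but
vanishes at `M`, so it is trivial on the support.

Membership in `^⊥M` is controlled numerically throughout: if `Hom(W, M) = 0`, then `W ∈ ^⊥M` if and
only if `⟨W, M⟩ = 0`, and otherwise `⟨W, M⟩ < 0`.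
-/

namespace FinQuiver

/-- The Euler form of `Q` as a bilinear form. -/
def eulerForm (Q : FinQuiver) : LinearMap.BilinForm ℤ (Fin Q.n → ℤ) :=
  LinearMap.mk₂ ℤ Q.euler
    (fun _ _ _ => by simp only [euler, Pi.add_apply, add_mul, Finset.sum_add_distrib]; ring)
    (fun _ _ _ => by
      simp only [euler, Pi.smul_apply, smul_eq_mul, mul_assoc, ← Finset.mul_sum, mul_sub])
    (fun _ _ _ => by simp only [euler, Pi.add_apply, mul_add, Finset.sum_add_distrib]; ring)
    (fun _ _ _ => by
      simp only [euler, Pi.smul_apply, smul_eq_mul, mul_left_comm, ← Finset.mul_sum, mul_sub])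

theorem eulerForm_apply (Q : FinQuiver) (d e : Fin Q.n → ℤ) : Q.eulerForm d e = Q.euler d e :=
  rfl

theorem euler_zero_left (Q : FinQuiver) (e : Fin Q.n → ℤ) : Q.euler 0 e = 0 :=
  Q.eulerForm.map_zero₂ e

theorem euler_add_left (Q : FinQuiver) (u v e : Fin Q.n → ℤ) :
    Q.euler (u + v) e = Q.euler u e + Q.euler v e :=
  Q.eulerForm.map_add₂ u v e

theorem euler_sub_left (Q : FinQuiver) (u v e : Fin Q.n → ℤ) :
    Q.euler (u - v) e = Q.euler u e - Q.euler v e :=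
  Q.eulerForm.map_sub₂ u v e

theorem euler_neg_left (Q : FinQuiver) (u e : Fin Q.n → ℤ) : Q.euler (-u) e = -Q.euler u e :=
  Q.eulerForm.map_neg₂ u e

theorem euler_eq_sum_single (Q : FinQuiver) (d e : Fin Q.n → ℤ) :
    Q.euler d e = ∑ j, e j * Q.euler d (Pi.single j 1) := by
  rw [← eulerForm_apply]
  conv_lhs => rw [pi_eq_sum_univ' e, map_sum]
  simp only [map_smul, smul_eq_mul, eulerForm_apply]

end FinQuiver

namespace QRep

theorem homSpace_eq_ker (M N : QRep k Q) : homSpace M N = LinearMap.ker (extMap M N) := by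
  ext f
  exact (forall_congr' fun x => sub_eq_zero.symm).trans funext_iff.symm

theorem extDim_eq_zero_iff (M N : QRep k Q) :
    extDim M N = 0 ↔ Function.Surjective (extMap M N) := by
  rw [extDim, Module.finrank_eq_zero_iff_of_free, Submodule.Quotient.subsingleton_iff,
    LinearMap.range_eq_top]

theorem euler_dimVec (M N : QRep k Q) :
    Q.euler M.dimVec N.dimVec = (homDim M N : ℤ) - extDim M N := by
  have hker := LinearMap.finrank_range_add_finrank_ker (extMap M N)
  have hcoker := Submodule.finrank_quotient_add_finrank (LinearMap.range (extMap M N))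
  rw [← homSpace_eq_ker] at hker
  simp only [Module.finrank_pi_fintype, Module.finrank_matrix,
    Fintype.card_fin, Module.finrank_self, mul_one, mul_comm (N.d _)] at hker hcoker
  have hvert : ∑ i, (M.d i : ℤ) * N.d i = (∑ i, M.d i * N.d i : ℕ) := by push_cast; rfl
  have harr : ∑ x, (M.d (Q.src x) : ℤ) * N.d (Q.tgt x) =
      (∑ x, M.d (Q.src x) * N.d (Q.tgt x) : ℕ) := by push_cast; rfl
  simp only [FinQuiver.euler, dimVec, hvert, harr, homDim, extDim, ← hker, ← hcoker]
  push_cast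
  ring

theorem lPerp_iff {M N : QRep k Q} :
    LPerp N M ↔ homDim M N = 0 ∧ Q.euler M.dimVec N.dimVec = 0 := by
  rw [LPerp, euler_dimVec]
  omega

theorem LPerp.euler_eq_zero {M N : QRep k Q} (h : LPerp N M) :
    Q.euler M.dimVec N.dimVec = 0 :=
  (lPerp_iff.1 h).2

section Coordinates

variable {E : Fin Q.n → Type*} [∀ i, AddCommGroup (E i)] [∀ i, Module k (E i)]

/-- The linear map attached to an arrow of `M`. -/
abbrev arrowMap (M : QRep k Q) (x : Fin Q.a) :
    (Fin (M.d (Q.src x)) → k) →ₗ[k] (Fin (M.d (Q.tgt x)) → k) :=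
  (M.mat x).mulVecLin

/-- The analogue of `extMap` for a source given by vector spaces `E i` and linear maps `φ x`. Its
kernel is the space of morphisms to `N`. -/
def linExtMap (φ : ∀ x, E (Q.src x) →ₗ[k] E (Q.tgt x)) (N : QRep k Q) :
    (∀ i, E i →ₗ[k] (Fin (N.d i) → k)) →ₗ[k]
      ∀ x, E (Q.src x) →ₗ[k] (Fin (N.d (Q.tgt x)) → k) where
  toFun h x := h (Q.tgt x) ∘ₗ φ x - N.arrowMap x ∘ₗ h (Q.src x)
  map_add' g h := by
    funext x
    simp only [Pi.add_apply, LinearMap.add_comp, LinearMap.comp_add, add_sub_add_comm]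
  map_smul' c h := by
    funext x
    simp only [Pi.smul_apply, LinearMap.smul_comp, LinearMap.comp_smul, smul_sub, RingHom.id_apply]

theorem mem_ker_linExtMap {φ : ∀ x, E (Q.src x) →ₗ[k] E (Q.tgt x)} {N : QRep k Q}
    {h : ∀ i, E i →ₗ[k] (Fin (N.d i) → k)} :
    h ∈ LinearMap.ker (linExtMap φ N) ↔
      ∀ x, h (Q.tgt x) ∘ₗ φ x = N.arrowMap x ∘ₗ h (Q.src x) :=
  funext_iff.trans (forall_congr' fun _ => sub_eq_zero)

/-- An isomorphism from the representation with spaces `E i` and maps `φ x` to `M`, so that `M` is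
that representation written in coordinates. -/
structure Coordinates (M : QRep k Q) (φ : ∀ x, E (Q.src x) →ₗ[k] E (Q.tgt x)) where
  equiv : ∀ i, E i ≃ₗ[k] (Fin (M.d i) → k)
  arrowMap_comp : ∀ x, M.arrowMap x ∘ₗ (equiv (Q.src x)).toLinearMap =
    (equiv (Q.tgt x)).toLinearMap ∘ₗ φ x

theorem exists_coordinates [∀ i, FiniteDimensional k (E i)]
    (φ : ∀ x, E (Q.src x) →ₗ[k] E (Q.tgt x)) : ∃ M : QRep k Q, Nonempty (Coordinates M φ) := by
  let e i := (Module.finBasis k (E i)).equivFun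
  refine ⟨⟨fun i => Module.finrank k (E i), fun x => LinearMap.toMatrix'
    ((e (Q.tgt x)).toLinearMap ∘ₗ φ x ∘ₗ (e (Q.src x)).symm.toLinearMap)⟩, ⟨⟨e, fun x => ?_⟩⟩⟩
  ext v
  simp [e, ← Matrix.toLin'_apply']

namespace Coordinates

/-- `M` in its own coordinates. -/
def refl (M : QRep k Q) : Coordinates (E := fun i => Fin (M.d i) → k) M M.arrowMap :=
  ⟨fun _ => LinearEquiv.refl k _, fun _ => rfl⟩

variable {M : QRep k Q} {φ : ∀ x, E (Q.src x) →ₗ[k] E (Q.tgt x)} (c : Coordinates M φ)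
include c

theorem finrank_eq (i : Fin Q.n) : Module.finrank k (E i) = M.d i := by
  simpa using (c.equiv i).finrank_eq

/-- Matrices of linear maps out of the spaces `E i`. -/
def toMatrix (N : QRep k Q) :
    (∀ i, E i →ₗ[k] (Fin (N.d i) → k)) ≃ₗ[k] ∀ i, Matrix (Fin (N.d i)) (Fin (M.d i)) k :=
  LinearEquiv.piCongrRight fun i =>
    (c.equiv i).arrowCongr (LinearEquiv.refl k _) ≪≫ₗ LinearMap.toMatrix'

/-- Matrices of families of linear maps indexed by the arrows, as in the codomain of `extMap`. -/
def arrowToMatrix (N : QRep k Q) :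
    (∀ x, E (Q.src x) →ₗ[k] (Fin (N.d (Q.tgt x)) → k)) ≃ₗ[k]
      ∀ x, Matrix (Fin (N.d (Q.tgt x))) (Fin (M.d (Q.src x))) k :=
  LinearEquiv.piCongrRight fun x =>
    (c.equiv (Q.src x)).arrowCongr (LinearEquiv.refl k _) ≪≫ₗ LinearMap.toMatrix'

theorem mulVecLin_toMatrix {N : QRep k Q} (h : ∀ i, E i →ₗ[k] (Fin (N.d i) → k)) (i : Fin Q.n) :
    (c.toMatrix N h i).mulVecLin = h i ∘ₗ (c.equiv i).symm.toLinearMap := by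
  change Matrix.toLin' (LinearMap.toMatrix' (h i ∘ₗ (c.equiv i).symm.toLinearMap)) = _
  rw [Matrix.toLin'_toMatrix']

theorem extMap_toMatrix {N : QRep k Q} (h : ∀ i, E i →ₗ[k] (Fin (N.d i) → k)) :
    extMap M N (c.toMatrix N h) = c.arrowToMatrix N (linExtMap φ N h) := by
  funext x
  apply Matrix.toLin'.injective
  have hx : (c.equiv (Q.tgt x)).symm.toLinearMap ∘ₗ M.arrowMap x =
      φ x ∘ₗ (c.equiv (Q.src x)).symm.toLinearMap := by
    rw [LinearEquiv.toLinearMap_symm_comp_eq, ← LinearMap.comp_assoc,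
      ← c.arrowMap_comp, LinearMap.comp_assoc, LinearEquiv.comp_symm, LinearMap.comp_id]
  calc (extMap M N (c.toMatrix N h) x).mulVecLin
      = (c.toMatrix N h (Q.tgt x)).mulVecLin ∘ₗ M.arrowMap x -
          N.arrowMap x ∘ₗ (c.toMatrix N h (Q.src x)).mulVecLin := by
        simp [extMap, ← Matrix.toLin'_apply', Matrix.toLin'_mul]
    _ = linExtMap φ N h x ∘ₗ (c.equiv (Q.src x)).symm.toLinearMap := by
        rw [mulVecLin_toMatrix, mulVecLin_toMatrix, LinearMap.comp_assoc, hx]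
        rfl
    _ = Matrix.toLin' (c.arrowToMatrix N (linExtMap φ N h) x) :=
        (Matrix.toLin'_toMatrix' _).symm

theorem toMatrix_mem_homSpace {N : QRep k Q} {h : ∀ i, E i →ₗ[k] (Fin (N.d i) → k)} :
    c.toMatrix N h ∈ homSpace M N ↔ h ∈ LinearMap.ker (linExtMap φ N) := by
  rw [homSpace_eq_ker, LinearMap.mem_ker, LinearMap.mem_ker, c.extMap_toMatrix,
    LinearEquiv.map_eq_zero_iff]

theorem homDim_eq (N : QRep k Q) :
    homDim M N = Module.finrank k (LinearMap.ker (linExtMap φ N)) := by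
  have hmap : (LinearMap.ker (linExtMap φ N)).map (c.toMatrix N).toLinearMap =
      homSpace M N := by
    ext f
    obtain ⟨h, rfl⟩ := (c.toMatrix N).surjective f
    rw [c.toMatrix_mem_homSpace, Submodule.mem_map_equiv, LinearEquiv.symm_apply_apply]
  rw [homDim, ← hmap, LinearEquiv.finrank_map_eq]

theorem homDim_eq_zero_iff (N : QRep k Q) :
    homDim M N = 0 ↔ ∀ h : ∀ i, E i →ₗ[k] (Fin (N.d i) → k),
      (∀ x, h (Q.tgt x) ∘ₗ φ x = N.arrowMap x ∘ₗ h (Q.src x)) → h = 0 := by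
  simp only [homDim, Submodule.finrank_eq_zero, Submodule.eq_bot_iff,
    (c.toMatrix N).surjective.forall, c.toMatrix_mem_homSpace, mem_ker_linExtMap,
    LinearEquiv.map_eq_zero_iff]

theorem extDim_eq_zero_iff (N : QRep k Q) :
    extDim M N = 0 ↔ Function.Surjective (linExtMap φ N) := by
  have hcomp : extMap M N ∘ c.toMatrix N = c.arrowToMatrix N ∘ linExtMap φ N :=
    funext c.extMap_toMatrix
  rw [QRep.extDim_eq_zero_iff, ← (c.toMatrix N).surjective.of_comp_iff, hcomp,
    EquivLike.comp_surjective]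

theorem isSubrep_iff (N : QRep k Q) :
    IsSubrep M N ↔ ∃ h : ∀ i, E i →ₗ[k] (Fin (N.d i) → k),
      (∀ x, h (Q.tgt x) ∘ₗ φ x = N.arrowMap x ∘ₗ h (Q.src x)) ∧
        ∀ i, Function.Injective (h i) := by
  simp only [IsSubrep, (c.toMatrix N).surjective.exists, c.toMatrix_mem_homSpace,
    mem_ker_linExtMap, c.mulVecLin_toMatrix, LinearMap.coe_comp, LinearEquiv.coe_coe,
    EquivLike.injective_comp]

end Coordinates

end Coordinates

theorem dimVec_eq_iff {M N : QRep k Q} : M.dimVec = N.dimVec ↔ M.d = N.d := by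
  simp [funext_iff, dimVec]

namespace IsSubrep

theorem refl (M : QRep k Q) : IsSubrep M M :=
  ⟨1, fun x => by simp, fun i => by simp [Function.injective_id]⟩

theorem trans {L M N : QRep k Q} (hLM : IsSubrep L M) (hMN : IsSubrep M N) : IsSubrep L N := by
  obtain ⟨f, hf, hf_inj⟩ := hLM
  obtain ⟨g, hg, hg_inj⟩ := hMN
  refine ⟨fun i => g i * f i, fun x => ?_, fun i => ?_⟩
  · rw [Matrix.mul_assoc, hf x, ← Matrix.mul_assoc, hg x, Matrix.mul_assoc]
  · rw [Matrix.mulVecLin_mul]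
    exact (hg_inj i).comp (hf_inj i)

theorem d_le {L M : QRep k Q} (h : IsSubrep L M) : L.d ≤ M.d := by
  obtain ⟨f, -, hf_inj⟩ := h
  intro i
  simpa using LinearMap.finrank_le_finrank_of_injective (hf_inj i)

end IsSubrep

theorem exists_isSubrep_ker {U N : QRep k Q}
    (h : ∀ i, (Fin (U.d i) → k) →ₗ[k] (Fin (N.d i) → k))
    (hh : ∀ x, h (Q.tgt x) ∘ₗ U.arrowMap x = N.arrowMap x ∘ₗ h (Q.src x)) :
    ∃ K : QRep k Q, IsSubrep K U ∧ ∀ i, K.d i = Module.finrank k (LinearMap.ker (h i)) := by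
  have hker (x : Fin Q.a) : ∀ v ∈ LinearMap.ker (h (Q.src x)),
      U.arrowMap x v ∈ LinearMap.ker (h (Q.tgt x)) := fun v hv => by
    rw [LinearMap.mem_ker] at hv ⊢
    rw [← LinearMap.comp_apply, hh x, LinearMap.comp_apply, hv, map_zero]
  obtain ⟨K, ⟨c⟩⟩ := exists_coordinates (E := fun i => LinearMap.ker (h i))
    fun x => (U.arrowMap x).restrict (hker x)
  exact ⟨K, (c.isSubrep_iff U).2 ⟨fun i => (LinearMap.ker (h i)).subtype, fun _ => rfl,
    fun i => Subtype.val_injective⟩, fun i => (c.finrank_eq i).symm⟩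

theorem exists_quotient {L W : QRep k Q} (hLW : IsSubrep L W) :
    ∃ V : QRep k Q, V.dimVec = W.dimVec - L.dimVec ∧
      ∀ N : QRep k Q, homDim W N = 0 → homDim V N = 0 := by
  obtain ⟨f, hf, hf_inj⟩ := ((Coordinates.refl L).isSubrep_iff W).1 hLW
  have hrange (x : Fin Q.a) : LinearMap.range (f (Q.src x)) ≤
      (LinearMap.range (f (Q.tgt x))).comap (W.arrowMap x) := by
    rintro _ ⟨v, rfl⟩
    exact ⟨L.arrowMap x v, LinearMap.congr_fun (hf x) v⟩
  obtain ⟨V, ⟨c⟩⟩ := exists_coordinates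
    (E := fun i => (Fin (W.d i) → k) ⧸ LinearMap.range (f i))
    fun x => Submodule.mapQ _ _ (W.arrowMap x) (hrange x)
  refine ⟨V, funext fun i => ?_, fun N hN => (c.homDim_eq_zero_iff N).2 fun h hh => ?_⟩
  · have hsum := Submodule.finrank_quotient_add_finrank (LinearMap.range (f i))
    rw [c.finrank_eq, LinearMap.finrank_range_of_inj (hf_inj i), Module.finrank_fin_fun,
      Module.finrank_fin_fun] at hsum
    simp [dimVec, ← hsum]
  · have hzero := ((Coordinates.refl W).homDim_eq_zero_iff N).1 hN
      (fun i => h i ∘ₗ Submodule.mkQ _) fun x => by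
        rw [← LinearMap.comp_assoc, ← hh x]
        rfl
    exact funext fun i => Submodule.linearMap_qext _ (congr_fun hzero i)

theorem exists_directSum (A B : QRep k Q) :
    ∃ C : QRep k Q, C.dimVec = A.dimVec + B.dimVec ∧
      ∀ N : QRep k Q, homDim A N = 0 → homDim B N = 0 → homDim C N = 0 := by
  obtain ⟨C, ⟨c⟩⟩ := exists_coordinates (E := fun i => (Fin (A.d i) → k) × (Fin (B.d i) → k))
    fun x => (A.arrowMap x).prodMap (B.arrowMap x)
  refine ⟨C, funext fun i => ?_, fun N hA hB => (c.homDim_eq_zero_iff N).2 fun h hh => ?_⟩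
  · simp [dimVec, ← c.finrank_eq]
  · have hA_zero := ((Coordinates.refl A).homDim_eq_zero_iff N).1 hA
      (fun i => h i ∘ₗ LinearMap.inl k _ _) fun x => by
        rw [← LinearMap.comp_assoc, ← hh x]
        ext; simp
    have hB_zero := ((Coordinates.refl B).homDim_eq_zero_iff N).1 hB
      (fun i => h i ∘ₗ LinearMap.inr k _ _) fun x => by
        rw [← LinearMap.comp_assoc, ← hh x]
        ext; simp
    exact funext fun i => LinearMap.prod_ext (congr_fun hA_zero i) (congr_fun hB_zero i)

/-- The zero representation. -/
def zero : QRep k Q := ⟨0, fun _ => 0⟩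

theorem homDim_zero_left (N : QRep k Q) : homDim zero N = 0 := by
  have (i : Fin Q.n) : IsEmpty (Fin ((zero : QRep k Q).d i)) := Fin.isEmpty
  exact Module.finrank_zero_of_subsingleton

theorem exists_isSubrep_generated (W : QRep k Q) (s : Set (Fin Q.n)) :
    ∃ U : QRep k Q, IsSubrep U W ∧ (∀ i ∈ s, U.d i = W.d i) ∧
      ∀ N : QRep k Q, (∀ i ∈ s, N.d i = 0) → homDim U N = 0 := by
  obtain ⟨U, ⟨hUW, hU⟩, hmin⟩ := exists_minimalFor_of_wellFoundedLT
    (fun U => IsSubrep U W ∧ ∀ i ∈ s, U.d i = W.d i) QRep.d ⟨W, IsSubrep.refl W, fun _ _ => rfl⟩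
  refine ⟨U, hUW, hU, fun N hN => ((Coordinates.refl U).homDim_eq_zero_iff N).2 fun h hh => ?_⟩
  obtain ⟨K, hKU, hK⟩ := exists_isSubrep_ker h hh
  have hKs (i : Fin Q.n) (hi : i ∈ s) : K.d i = W.d i := by
    have : IsEmpty (Fin (N.d i)) := by
      rw [hN i hi]
      infer_instance
    rw [hK i, Subsingleton.elim (h i) 0, LinearMap.ker_zero, finrank_top, Module.finrank_fin_fun,
      hU i hi]
  have hdim : U.d = K.d := (hmin ⟨hKU.trans hUW, hKs⟩ hKU.d_le).antisymm hKU.d_le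
  refine funext fun i => LinearMap.ker_eq_top.1 (Submodule.eq_top_of_finrank_eq ?_)
  rw [← hK i, ← hdim, Module.finrank_fin_fun]

theorem LPerp.exists_quotient {L N W : QRep k Q} (hW : LPerp N W) (hLW : IsSubrep L W)
    (hL : homDim L N = 0) :
    LPerp N L ∧ ∃ V : QRep k Q, LPerp N V ∧ V.dimVec = W.dimVec - L.dimVec := by
  obtain ⟨V, hVdim, hVhom⟩ := QRep.exists_quotient hLW
  have hV := hVhom N hW.1
  have hsum : Q.euler V.dimVec N.dimVec =
      Q.euler W.dimVec N.dimVec - Q.euler L.dimVec N.dimVec := by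
    rw [hVdim, Q.euler_sub_left]
  rw [euler_dimVec, euler_dimVec, euler_dimVec, hV, hL, hW.1, hW.2] at hsum
  exact ⟨⟨hL, by omega⟩, V, ⟨hV, by omega⟩, hVdim⟩

/-- The dimension vectors of the objects of the left perpendicular category of `M`. -/
def perpDimVecs (M : QRep k Q) : AddSubmonoid (Fin Q.n → ℤ) where
  carrier := {u | ∃ W : QRep k Q, LPerp M W ∧ W.dimVec = u}
  zero_mem' := ⟨zero, lPerp_iff.2 ⟨homDim_zero_left M, Q.euler_zero_left _⟩, rfl⟩
  add_mem' := by
    rintro _ _ ⟨A, hA, rfl⟩ ⟨B, hB, rfl⟩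
    obtain ⟨C, hCdim, hChom⟩ := exists_directSum A B
    refine ⟨C, lPerp_iff.2 ⟨hChom M hA.1 hB.1, ?_⟩, hCdim⟩
    rw [hCdim, Q.euler_add_left, hA.euler_eq_zero, hB.euler_eq_zero, add_zero]

theorem LPerp.dimVec_mem {M W : QRep k Q} (h : LPerp M W) : W.dimVec ∈ M.perpDimVecs :=
  ⟨W, h, rfl⟩

theorem exists_relSimple_isSubrep {M W : QRep k Q} (hW : LPerp M W) (hne : W.d ≠ 0) :
    ∃ S, RelSimple M S ∧ IsSubrep S W := by
  obtain ⟨S, ⟨hSW, hS, hSne⟩, hmin⟩ := exists_minimalFor_of_wellFoundedLT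
    (fun S => IsSubrep S W ∧ LPerp M S ∧ S.d ≠ 0) QRep.d ⟨W, IsSubrep.refl W, hW, hne⟩
  refine ⟨S, ⟨hS, Function.ne_iff.1 hSne, fun L hLS hL => ?_⟩, hSW⟩
  refine (eq_or_ne L.d 0).imp congr_fun fun hLne => dimVec_eq_iff.2 ?_
  exact hLS.d_le.antisymm (hmin ⟨hLS.trans hSW, hL, hLne⟩ hLS.d_le)

theorem perpDimVecs_eq_closure (M : QRep k Q) :
    M.perpDimVecs = AddSubmonoid.closure {u | ∃ S, RelSimple M S ∧ S.dimVec = u} := by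
  apply le_antisymm
  · rintro _ ⟨W, hW, rfl⟩
    induction hd : W.d using WellFoundedLT.induction generalizing W with
    | ind e ih =>
      subst hd
      by_cases hne : W.d = 0
      · rw [show W.dimVec = 0 from funext fun i => by simp [dimVec, hne]]
        exact zero_mem _
      obtain ⟨S, hS, hSW⟩ := exists_relSimple_isSubrep hW hne
      obtain ⟨-, V, hV, hVdim⟩ := hW.exists_quotient hSW hS.1.1
      have hsum : V.d + S.d = W.d := funext fun i => by
        have := congr_fun hVdim i
        simp only [dimVec, Pi.sub_apply] at this
        rw [Pi.add_apply]
        omega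
      have hlt : V.d < W.d :=
        hsum ▸ lt_add_of_pos_right _ (pos_iff_ne_zero.2 (Function.ne_iff.2 hS.2.1))
      rw [← sub_add_cancel W.dimVec S.dimVec, ← hVdim]
      exact add_mem (ih _ hlt V hV rfl) (AddSubmonoid.subset_closure ⟨S, hS, rfl⟩)
  · rw [AddSubmonoid.closure_le]
    rintro _ ⟨S, hS, rfl⟩
    exact hS.1.dimVec_mem

end QRep

namespace FinQuiver

/-- The directed paths of `Q` starting at `i`, indexed by their endpoint. Unlike `Quiver.Path`, this
family carries no composability proofs, as the arrows of `Q` are numbered globally. -/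
inductive Path (Q : FinQuiver) (i : Fin Q.n) : Fin Q.n → Type
  | nil : Path Q i i
  | snoc (x : Fin Q.a) (p : Path Q i (Q.src x)) : Path Q i (Q.tgt x)

namespace Path

theorem height_le {h : Fin Q.n → ℕ} (hh : ∀ x, h (Q.src x) < h (Q.tgt x)) {i j : Fin Q.n}
    (p : Q.Path i j) : h i ≤ h j := by
  induction p with
  | nil => exact le_rfl
  | snoc x _ ih => exact ih.trans (hh x).le

theorem eq_nil (hac : Q.Acyclic) {i : Fin Q.n} (p : Q.Path i i) : p = nil := by
  obtain ⟨h, hh⟩ := hac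
  cases p with
  | nil => rfl
  | snoc x p => exact absurd (p.height_le hh) (hh x).not_ge

theorem finite (hac : Q.Acyclic) (i j : Fin Q.n) : Finite (Q.Path i j) := by
  obtain ⟨h, hh⟩ := hac
  induction hm : h j using Nat.strong_induction_on generalizing j with
  | h m ih =>
    subst hm
    have (x : {x // Q.tgt x = j}) : Finite (Q.Path i (Q.src x)) :=
      ih _ ((hh x).trans_eq (congr_arg h x.2)) _ rfl
    let f : PLift (i = j) ⊕ (Σ x : {x // Q.tgt x = j}, Q.Path i (Q.src x)) → Q.Path i j :=
      Sum.elim (fun ⟨e⟩ => e ▸ nil) fun ⟨⟨x, hx⟩, p⟩ => hx ▸ snoc x p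
    refine Finite.of_surjective f fun p => ?_
    cases p with
    | nil => exact ⟨Sum.inl ⟨rfl⟩, rfl⟩
    | snoc x p => exact ⟨Sum.inr ⟨⟨x, rfl⟩, p⟩, rfl⟩

end Path

end FinQuiver

namespace QRep

section Projective

variable {i : Fin Q.n}

/-- The space at `j` of the projective at `i`, with the paths from `i` to `j` as a basis. -/
abbrev PathSpace (k : Type) [Field k] (i j : Fin Q.n) : Type :=
  Q.Path i j →₀ k

/-- The structure maps of the projective at `i`, extending paths by an arrow. -/
noncomputable def pathMap (k : Type) [Field k] (i : Fin Q.n) (x : Fin Q.a) :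
    PathSpace k i (Q.src x) →ₗ[k] PathSpace k i (Q.tgt x) :=
  Finsupp.lmapDomain k k (FinQuiver.Path.snoc x)

/-- The values on paths of the family `h` with `linExtMap (pathMap k i) N h = c` that sends the
trivial path to `v`. -/
noncomputable def pathLift {N : QRep k Q}
    (c : ∀ x, PathSpace k i (Q.src x) →ₗ[k] (Fin (N.d (Q.tgt x)) → k)) (v : Fin (N.d i) → k) :
    ∀ {j : Fin Q.n}, Q.Path i j → Fin (N.d j) → k
  | _, .nil => v
  | _, .snoc x p => c x (Finsupp.single p 1) + N.arrowMap x (pathLift c v p)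

theorem exists_linExtMap_pathMap_eq {N : QRep k Q}
    (c : ∀ x, PathSpace k i (Q.src x) →ₗ[k] (Fin (N.d (Q.tgt x)) → k)) (v : Fin (N.d i) → k) :
    ∃ h, linExtMap (pathMap k i) N h = c ∧ h i (Finsupp.single .nil 1) = v := by
  refine ⟨fun j => Finsupp.linearCombination k (pathLift c v), funext fun x => ?_, ?_⟩
  · ext p : 2
    simp [linExtMap, pathMap, pathLift]
  · simp [pathLift]

theorem eq_zero_of_linExtMap_pathMap_eq_zero {N : QRep k Q}
    {h : ∀ j, PathSpace k i j →ₗ[k] (Fin (N.d j) → k)}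
    (hh : linExtMap (pathMap k i) N h = 0) (hnil : h i (Finsupp.single .nil 1) = 0) : h = 0 := by
  have hsingle {j : Fin Q.n} (p : Q.Path i j) : h j (Finsupp.single p 1) = 0 := by
    induction p with
    | nil => exact hnil
    | snoc x p ih =>
      have := LinearMap.congr_fun (mem_ker_linExtMap.1 hh x) (Finsupp.single p 1)
      simpa [pathMap, ih] using this
  funext j
  ext p : 2
  simpa using hsingle p

theorem finrank_ker_linExtMap_pathMap (i : Fin Q.n) (N : QRep k Q) :
    Module.finrank k (LinearMap.ker (linExtMap (pathMap k i) N)) = N.d i := by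
  let ev := (LinearMap.applyₗ (Finsupp.single .nil 1) ∘ₗ
    LinearMap.proj (φ := fun j => PathSpace k i j →ₗ[k] (Fin (N.d j) → k)) i).domRestrict
      (LinearMap.ker (linExtMap (pathMap k i) N))
  have hinj : Function.Injective ev := (injective_iff_map_eq_zero _).2 fun h hnil =>
    Subtype.ext (eq_zero_of_linExtMap_pathMap_eq_zero h.2 hnil)
  have hsurj : Function.Surjective ev := fun v => by
    obtain ⟨h, hh, hv⟩ := exists_linExtMap_pathMap_eq 0 v
    exact ⟨⟨h, hh⟩, hv⟩
  rw [(LinearEquiv.ofBijective _ ⟨hinj, hsurj⟩).finrank_eq, Module.finrank_fin_fun]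

end Projective

theorem indec_of_homDim_self_eq_one {M : QRep k Q} (h : homDim M M = 1) : Indec M := by
  have hone : (1 : ∀ i, Matrix (Fin (M.d i)) (Fin (M.d i)) k) ∈ homSpace M M := fun x => by simp
  have hne : ∃ i, M.d i ≠ 0 := by
    by_contra! hzero
    have (i : Fin Q.n) : IsEmpty (Fin (M.d i)) := by
      rw [hzero i]
      infer_instance
    exact zero_ne_one (Module.finrank_zero_of_subsingleton.symm.trans h)
  obtain ⟨i, hi⟩ := hne
  have : Nonempty (Fin (M.d i)) := Fin.pos_iff_nonempty.1 (Nat.pos_of_ne_zero hi)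
  have hone_ne : (⟨1, hone⟩ : homSpace M M) ≠ 0 := fun h0 =>
    one_ne_zero (congr_fun (congr_arg Subtype.val h0) i)
  refine ⟨⟨i, hi⟩, fun f hf hidem => ?_⟩
  obtain ⟨c, hc⟩ := (finrank_eq_one_iff_of_nonzero' _ hone_ne).1 h ⟨f, hf⟩
  obtain rfl : c • 1 = f := congr_arg Subtype.val hc
  have hcc : c * c = c := by
    simpa [smul_smul, ← sub_eq_zero (a := c * c), ← sub_smul] using hidem i
  rcases mul_left_eq_self₀.1 hcc with rfl | rfl
  · exact .inr (one_smul k _)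
  · exact .inl (zero_smul k _)

theorem exists_projective (k : Type) [Field k] (hac : Q.Acyclic) (i : Fin Q.n) :
    ∃ P : QRep k Q, Indec P ∧ IsProjRep P ∧ ∀ N, homDim P N = N.d i := by
  have (j : Fin Q.n) : Finite (Q.Path i j) := FinQuiver.Path.finite hac i j
  obtain ⟨P, ⟨c⟩⟩ := exists_coordinates (pathMap k i)
  have hhom (N : QRep k Q) : homDim P N = N.d i := by
    rw [c.homDim_eq, finrank_ker_linExtMap_pathMap]
  have hPi : P.d i = 1 := by
    let : Unique (Q.Path i i) := ⟨⟨.nil⟩, FinQuiver.Path.eq_nil hac⟩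
    rw [← c.finrank_eq, Module.finrank_finsupp_self, Fintype.card_unique]
  refine ⟨P, indec_of_homDim_self_eq_one ((hhom P).trans hPi), fun N => ?_, hhom⟩
  exact (c.extDim_eq_zero_iff N).2 fun g => (exists_linExtMap_pathMap_eq g 0).imp fun _ => And.left

end QRep

theorem FinQuiver.eq_sum_euler_smul {p : Fin Q.n → Fin Q.n → ℤ}
    (hp : ∀ i j, Q.euler (p i) (Pi.single j 1) = (Pi.single j 1 : Fin Q.n → ℤ) i)
    (u : Fin Q.n → ℤ) : u = ∑ i, Q.euler u (Pi.single i 1) • p i := by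
  let S : Module.End ℤ (Fin Q.n → ℤ) := Fintype.linearCombination ℤ p
  let T : Module.End ℤ (Fin Q.n → ℤ) := LinearMap.pi fun i => Q.eulerForm.flip (Pi.single i 1)
  have hTS : T * S = 1 := LinearMap.ext fun c => funext fun j =>
    calc Q.eulerForm (∑ i, c i • p i) (Pi.single j 1)
        = ∑ i, c i * (Pi.single j 1 : Fin Q.n → ℤ) i := by
          simp only [map_sum, map_smul, LinearMap.sum_apply, LinearMap.smul_apply, smul_eq_mul,
            eulerForm_apply, hp]
      _ = c j := by simp [Pi.single_apply]
  exact (LinearMap.congr_fun (mul_eq_one_comm.1 hTS) u).symm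

namespace QRep

/-- The simple representation at the vertex `j`, with zero maps along all arrows. -/
def simple (k : Type) [Field k] (j : Fin Q.n) : QRep k Q := ⟨Pi.single j 1, fun _ => 0⟩

theorem dimVec_simple (j : Fin Q.n) : (simple k j).dimVec = Pi.single j 1 := by
  funext i
  simp [simple, dimVec, Pi.single_apply]

theorem euler_dimVec_single (M : QRep k Q) (j : Fin Q.n) :
    Q.euler M.dimVec (Pi.single j 1) = (homDim M (simple k j) : ℤ) - extDim M (simple k j) := by
  rw [← dimVec_simple (k := k), euler_dimVec]

/-- The vectors `u` whose weight `⟨u,−⟩` vanishes on the support of `M`. -/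
def trivialWeights (M : QRep k Q) : AddSubgroup (Fin Q.n → ℤ) where
  carrier := {u | ∀ e, SupportedOn M e → Q.euler u e = 0}
  zero_mem' := fun e _ => Q.euler_zero_left e
  add_mem' := fun {u v} hu hv e he => by
    rw [Q.euler_add_left, hu e he, hv e he, add_zero]
  neg_mem' := fun {u} hu e he => by
    rw [Q.euler_neg_left, hu e he, neg_zero]

theorem mem_trivialWeights_iff {M : QRep k Q} {u : Fin Q.n → ℤ} :
    u ∈ M.trivialWeights ↔ ∀ j, M.d j ≠ 0 → Q.euler u (Pi.single j 1) = 0 := by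
  refine ⟨fun hu j hj => hu _ fun i hi => ?_, fun hu e he => ?_⟩
  · obtain rfl : i = j := by
      by_contra hij
      exact hi (Pi.single_eq_of_ne hij 1)
    exact hj
  · rw [Q.euler_eq_sum_single]
    refine Finset.sum_eq_zero fun j _ => mul_eq_zero.2 ?_
    exact or_iff_not_imp_left.2 fun hj => hu j (he j hj)

theorem mem_trivialWeights_of_nonneg {M : QRep k Q} {u : Fin Q.n → ℤ}
    (hM : Q.euler u M.dimVec = 0) (hu : ∀ j, M.d j ≠ 0 → 0 ≤ Q.euler u (Pi.single j 1)) :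
    u ∈ M.trivialWeights := by
  have hterm (j : Fin Q.n) : 0 ≤ M.dimVec j * Q.euler u (Pi.single j 1) := by
    by_cases hj : M.d j = 0
    · simp [dimVec, hj]
    · exact mul_nonneg (Int.natCast_nonneg _) (hu j hj)
  rw [Q.euler_eq_sum_single, Finset.sum_eq_zero_iff_of_nonneg fun j _ => hterm j] at hM
  exact mem_trivialWeights_iff.2 fun j hj =>
    (mul_eq_zero.1 (hM j (Finset.mem_univ j))).resolve_left (Int.natCast_ne_zero.2 hj)

theorem IsProjRep.dimVec_mem_trivialWeights {M P : QRep k Q} (hP : IsProjRep P)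
    (hPM : LPerp M P) : P.dimVec ∈ M.trivialWeights :=
  mem_trivialWeights_of_nonneg hPM.euler_eq_zero fun j _ => by
    rw [euler_dimVec_single, hP, Nat.cast_zero, sub_zero]
    exact Int.natCast_nonneg _

theorem trivialWeights_eq_closure (hac : Q.Acyclic) (M : QRep k Q) :
    M.trivialWeights = AddSubgroup.closure
      {u | ∃ P, Indec P ∧ IsProjRep P ∧ LPerp M P ∧ P.dimVec = u} := by
  apply le_antisymm
  · intro u hu
    choose P hindec hproj hhom using exists_projective k hac
    have hdual (i j : Fin Q.n) :
        Q.euler (P i).dimVec (Pi.single j 1) = (Pi.single j 1 : Fin Q.n → ℤ) i := by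
      rw [euler_dimVec_single, hhom, hproj, Nat.cast_zero, sub_zero, ← dimVec_simple (k := k)]
      rfl
    rw [FinQuiver.eq_sum_euler_smul hdual u]
    refine sum_mem fun i _ => ?_
    by_cases hi : M.d i = 0
    · refine zsmul_mem (AddSubgroup.subset_closure ?_) _
      exact ⟨P i, hindec i, hproj i, ⟨(hhom i M).trans hi, hproj i M⟩, rfl⟩
    · rw [mem_trivialWeights_iff.1 hu i hi, zero_smul]
      exact zero_mem _
  · rw [AddSubgroup.closure_le]
    rintro _ ⟨P, -, hP, hPM, rfl⟩
    exact hP.dimVec_mem_trivialWeights hPM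

theorem LPerp.exists_supportedOn {M W : QRep k Q} (hW : LPerp M W) :
    ∃ V : QRep k Q, SupportedOn M V.dimVec ∧ LPerp M V ∧
      W.dimVec - V.dimVec ∈ M.trivialWeights := by
  obtain ⟨U, hUW, hUd, hUhom⟩ := exists_isSubrep_generated W {i | M.d i = 0}
  obtain ⟨hU, V, hV, hVdim⟩ := hW.exists_quotient hUW (hUhom M fun _ => id)
  refine ⟨V, fun i hVi hi => hVi ?_, hV, ?_⟩
  · rw [hVdim, Pi.sub_apply, dimVec, dimVec, hUd i hi, sub_self]
  rw [hVdim, sub_sub_cancel, ← neg_mem_iff]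
  refine mem_trivialWeights_of_nonneg ?_ fun j hj => ?_
  · rw [Q.euler_neg_left, hU.euler_eq_zero, neg_zero]
  · have hhom : homDim U (simple k j) = 0 := hUhom _ fun i (hi : M.d i = 0) =>
      Pi.single_eq_of_ne (fun hij : i = j => hj (hij ▸ hi)) 1
    rw [Q.euler_neg_left, euler_dimVec_single, hhom]
    omega

theorem semiStableAt_iff {M : QRep k Q} {d : Fin Q.n → ℤ} :
    SemiStableAt d M ↔
      ∃ m : ℕ, 0 < m ∧ m • d ∈ M.perpDimVecs ⊔ M.trivialWeights.toAddSubmonoid := by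
  have hsmul (m : ℕ) (e : Fin Q.n → ℤ) : Q.euler (m • d) e = m * Q.euler d e := by
    rw [← Q.eulerForm_apply, map_nsmul, LinearMap.smul_apply, nsmul_eq_mul, Q.eulerForm_apply]
  constructor
  · rintro ⟨m, hm, V, -, hVd, hVM⟩
    lift m to ℕ using hm.le
    refine ⟨m, Int.natCast_pos.1 hm, AddSubmonoid.mem_sup.2
      ⟨V.dimVec, LPerp.dimVec_mem hVM, m • d - V.dimVec, fun e he => ?_, add_sub_cancel _ _⟩⟩
    rw [Q.euler_sub_left, hsmul, hVd e he, sub_self]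
  · rintro ⟨m, hm, hmem⟩
    obtain ⟨_, ⟨W, hW, rfl⟩, u, hu, hsum⟩ := AddSubmonoid.mem_sup.1 hmem
    obtain ⟨V, hsupp, hV, hWV⟩ := hW.exists_supportedOn
    refine ⟨m, Int.natCast_pos.2 hm, V, hsupp, fun e he => ?_, hV⟩
    have hdiff := add_mem hWV hu e he
    rwa [sub_add_eq_add_sub, hsum, Q.euler_sub_left, hsmul, sub_eq_zero, eq_comm] at hdiff

end QRep

theorem inCone_iff_mem_hull {n : ℕ} {S : Set (Fin n → ℚ)} {v : Fin n → ℚ} :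
    InCone S v ↔ v ∈ PointedCone.hull ℚ S := by
  constructor
  · rintro ⟨l, hl, rfl⟩
    refine list_sum_mem fun w hw => ?_
    obtain ⟨p, hp, rfl⟩ := List.mem_map.1 hw
    exact PointedCone.smul_mem _ (hl p hp).1 (PointedCone.subset_hull (hl p hp).2)
  · intro hv
    induction hv using Submodule.span_induction with
    | mem v hv => exact ⟨[(1, v)], by simp [hv], by simp⟩
    | zero => exact ⟨[], by simp, rfl⟩
    | add v w _ _ hv hw =>
      obtain ⟨l, hl, rfl⟩ := hv
      obtain ⟨l', hl', rfl⟩ := hw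
      exact ⟨l ++ l', fun p hp => (List.mem_append.1 hp).elim (hl p) (hl' p), by simp⟩
    | smul c v _ hv =>
      obtain ⟨l, hl, rfl⟩ := hv
      refine ⟨l.map fun p => (c.1 * p.1, p.2), fun p hp => ?_, ?_⟩
      · obtain ⟨q, hq, rfl⟩ := List.mem_map.1 hp
        exact ⟨mul_nonneg c.2 (hl q hq).1, (hl q hq).2⟩
      · simp [List.smul_sum, Function.comp_def, mul_smul]

theorem mem_hull_image_iff {A V : Type*} [AddCommMonoid A] [AddCommMonoid V] [Module ℚ V]
    {f : A →+ V} (hf : Function.Injective f) (Λ : AddSubmonoid A) {a : A} :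
    f a ∈ PointedCone.hull ℚ (f '' Λ) ↔ ∃ m : ℕ, 0 < m ∧ m • a ∈ Λ := by
  constructor
  · suffices h : ∀ v ∈ PointedCone.hull ℚ (f '' Λ), ∃ m : ℕ, 0 < m ∧ ∃ b ∈ Λ, m • v = f b by
      intro ha
      obtain ⟨m, hm, b, hb, hab⟩ := h _ ha
      rw [← map_nsmul] at hab
      exact ⟨m, hm, hf hab ▸ hb⟩
    intro v hv
    induction hv using Submodule.span_induction with
    | mem v hv =>
      obtain ⟨b, hb, rfl⟩ := hv
      exact ⟨1, one_pos, b, hb, one_smul ℕ _⟩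
    | zero => exact ⟨1, one_pos, 0, zero_mem Λ, by simp⟩
    | add v w _ _ hv hw =>
      obtain ⟨m, hm, b, hb, hmb⟩ := hv
      obtain ⟨l, hl, b', hb', hlb⟩ := hw
      refine ⟨l * m, mul_pos hl hm, l • b + m • b', add_mem (nsmul_mem hb l) (nsmul_mem hb' m), ?_⟩
      rw [smul_add, mul_smul, hmb, mul_comm l, mul_smul, hlb, map_add, map_nsmul, map_nsmul]
    | smul c v _ hv =>
      obtain ⟨m, hm, b, hb, hmb⟩ := hv
      obtain ⟨c, hc⟩ := c
      lift c to ℚ≥0 using hc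
      refine ⟨c.den * m, mul_pos c.den_pos hm, c.num • b, nsmul_mem hb c.num, ?_⟩
      calc (c.den * m) • (c : ℚ) • v = ((c.den : ℚ) * c) • m • v := by module
        _ = (c.num : ℚ) • f b := by
          rw [hmb, show (c.den : ℚ) * c = c.num from mod_cast c.den_mul_eq_num]
        _ = f (c.num • b) := by rw [Nat.cast_smul_eq_nsmul, map_nsmul]
  · rintro ⟨m, hm, ha⟩
    have hm' : (m : ℚ) ≠ 0 := Nat.cast_ne_zero.2 hm.ne'
    have hmem := PointedCone.smul_mem _ (inv_nonneg.2 (Nat.cast_nonneg (α := ℚ) m))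
      (PointedCone.subset_hull (R := ℚ) (Set.mem_image_of_mem f ha))
    rwa [map_nsmul, ← Nat.cast_smul_eq_nsmul ℚ, inv_smul_smul₀ hm'] at hmem

/-- Coordinatewise inclusion of `ℤ^n` into `ℚ^n`. -/
def castVec (n : ℕ) : (Fin n → ℤ) →+ (Fin n → ℚ) :=
  (Int.castAddHom ℚ).compLeft (Fin n)

theorem castVec_injective (n : ℕ) : Function.Injective (castVec n) :=
  Int.cast_injective.comp_left

theorem hull_HssGens_eq (hac : Q.Acyclic) (M : QRep k Q) :
    PointedCone.hull ℚ (HssGens M) = PointedCone.hull ℚ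
      (castVec Q.n '' (M.perpDimVecs ⊔ M.trivialWeights.toAddSubmonoid : AddSubmonoid _)) := by
  apply le_antisymm
  · refine Submodule.span_mono ?_
    rintro _ (⟨S, hS, rfl⟩ | ⟨P, -, hP, hPM, rfl⟩)
    · exact ⟨S.dimVec, AddSubmonoid.mem_sup_left hS.1.dimVec_mem, rfl⟩
    · refine ⟨-P.dimVec, AddSubmonoid.mem_sup_right
        (M.trivialWeights.neg_mem (hP.dimVec_mem_trivialWeights hPM)), ?_⟩
      rw [map_neg]
      rfl
  · let K : AddSubmonoid (Fin Q.n → ℤ) :=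
      (PointedCone.hull ℚ (HssGens M)).toAddSubmonoid.comap (castVec Q.n)
    have hperp : M.perpDimVecs ≤ K := by
      rw [perpDimVecs_eq_closure, AddSubmonoid.closure_le]
      rintro _ ⟨S, hS, rfl⟩
      exact PointedCone.subset_hull (.inl ⟨S, hS, rfl⟩)
    have htriv : M.trivialWeights.toAddSubmonoid ≤ K := by
      rw [trivialWeights_eq_closure hac, AddSubgroup.closure_toAddSubmonoid,
        AddSubmonoid.closure_le]
      rintro u (⟨P, -, -, hPM, rfl⟩ | ⟨P, hP, hproj, hPM, hu⟩)
      · exact hperp hPM.dimVec_mem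
      · refine PointedCone.subset_hull (.inr ⟨P, hP, hproj, hPM, ?_⟩)
        rw [← neg_neg u, ← hu, map_neg]
        rfl
    rw [Submodule.span_le, Set.image_subset_iff]
    exact sup_le hperp htriv

theorem mem_Hss_iff_semistable_general (hac : Q.Acyclic) (M : QRep k Q) (d : Fin Q.n → ℤ) :
    InCone (HssGens M) (fun i => (d i : ℚ)) ↔ SemiStableAt d M := by
  rw [inCone_iff_mem_hull, hull_HssGens_eq hac, semiStableAt_iff]
  exact mem_hull_image_iff (castVec_injective Q.n) _

/-- for a Dynkin or Euclidean quiver `Q`, a real Schur root `α` and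
`d ∈ ℤ^n`, we have `d ∈ H_α^{ss}` iff `M(α)` is `⟨d,−⟩`-semi-stable. -/
theorem mem_Hss_iff_semistable (k : Type) [Field k] [IsAlgClosed k]
    (Q : FinQuiver) (hQ : Q.IsDynkin ∨ Q.IsEuclidean)
    (α : Fin Q.n → ℤ) (hα : IsSchurRoot k Q α) (hreal : Q.euler α α = 1)
    (Mα : QRep k Q) (hMd : Mα.dimVec = α) (hMind : Indec Mα)
    (hMexc : extDim Mα Mα = 0)
    (d : Fin Q.n → ℤ) :
    InCone (HssGens Mα) (fun i => ((d i : ℚ))) ↔ SemiStableAt d Mα :=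
  mem_Hss_iff_semistable_general (hQ.elim And.left And.left) Mα d
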